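/- arXiv:2108.09513 — 2 statements merged into one kernel-verified Lean document; each statement's English description precedes it below -/
import Mathlib

section
/- Let d be a natural number and Θ ∈ ℝ^d, and define P(g) = Σ_{i=1}^d clip(g·Θ_i − 1/2), where clip(x) = min(max(x, 0), 1). Suppose g* > 0 is such that there exists an index i with 1/2 < g*·Θ_i < 3/2. Then g* is the unique positive real attaining the value P(g*): for every g > 0 with P(g) = P(g*), one has g = g*. -/
/-- `clip x = min (max x 0) 1` clips a real number into `[0,1]`. -/
noncomputable def clip (x : ℝ) : ℝ := min (max x 0) 1

/-!
Every summand is monotone in `g ≥ 0`, so two equal values of the sum force equality summand by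
summand. In the summand whose argument lies strictly inside `[0,1]`, clipping loses no
information, and `g` can be read off.
-/

theorem monotone_clip : Monotone clip :=
  (monotone_id.max monotone_const).min monotone_const

theorem clip_of_nonpos {x : ℝ} (hx : x ≤ 0) : clip x = 0 := by
  rw [clip, max_eq_right hx, min_eq_left zero_le_one]

theorem clip_eq_clip_iff_of_mem_Ioo {x y : ℝ} (hy : y ∈ Set.Ioo 0 1) :
    clip x = clip y ↔ x = y := by
  have clip_y_eq : clip y = y := by rw [clip, max_eq_left hy.1.le, min_eq_left hy.2.le]
  rw [clip_y_eq, clip, min_eq_iff, max_eq_iff]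
  grind

theorem monotoneOn_clip_mul_sub {c : ℝ} (hc : 0 ≤ c) (t : ℝ) :
    MonotoneOn (fun g ↦ clip (g * t - c)) (Set.Ici 0) := by
  intro a ha b hb hab
  rcases le_total 0 t with ht | ht
  · exact monotone_clip (sub_le_sub_right (mul_le_mul_of_nonneg_right hab ht) c)
  · have clip_eq_zero {g : ℝ} (hg : 0 ≤ g) : clip (g * t - c) = 0 :=
      clip_of_nonpos (sub_nonpos.2 ((mul_nonpos_of_nonneg_of_nonpos hg ht).trans hc))
    exact ((clip_eq_zero ha).trans (clip_eq_zero hb).symm).le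

theorem eq_of_sum_eq_sum_of_monotoneOn {ι α M : Type*} [LinearOrder α] [AddCommMonoid M]
    [PartialOrder M] [IsOrderedCancelAddMonoid M] {s : Finset ι} {f : ι → α → M} {t : Set α}
    (hf : ∀ i ∈ s, MonotoneOn (f i) t) {a b : α} (ha : a ∈ t) (hb : b ∈ t)
    (hsum : ∑ i ∈ s, f i a = ∑ i ∈ s, f i b) : ∀ i ∈ s, f i a = f i b := by
  rcases le_total a b with hab | hba
  · exact (Finset.sum_eq_sum_iff_of_le fun i hi ↦ hf i hi ha hb hab).1 hsum
  · exact fun i hi ↦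
      ((Finset.sum_eq_sum_iff_of_le fun j hj ↦ hf j hj hb ha hba).1 hsum.symm i hi).symm

theorem clip_sum_unique_general {ι : Type*} {s : Finset ι} {Θ c : ι → ℝ}
    (hc : ∀ i ∈ s, 0 ≤ c i) {g gstar : ℝ} (hg : 0 ≤ g) (hgstar : 0 ≤ gstar)
    (hi : ∃ i ∈ s, gstar * Θ i - c i ∈ Set.Ioo 0 1)
    (hsum : ∑ i ∈ s, clip (g * Θ i - c i) = ∑ i ∈ s, clip (gstar * Θ i - c i)) :
    g = gstar := by
  obtain ⟨i, his, hmem⟩ := hi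
  have clip_eq : clip (g * Θ i - c i) = clip (gstar * Θ i - c i) :=
    eq_of_sum_eq_sum_of_monotoneOn (fun j hj ↦ monotoneOn_clip_mul_sub (hc j hj) (Θ j))
      hg hgstar hsum i his
  have mul_eq : g * Θ i = gstar * Θ i :=
    sub_left_injective ((clip_eq_clip_iff_of_mem_Ioo hmem).1 clip_eq)
  have gstar_mul_pos : 0 < gstar * Θ i := (hc i his).trans_lt (sub_pos.1 hmem.1)
  exact mul_right_cancel₀ (right_ne_zero_of_mul gstar_mul_pos.ne') mul_eq

/-- Uniqueness part of Theorem 4.2: if at `g* > 0` some coordinate of `g* • Θ - 0.5`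
lies strictly between `0` and `1`, then `g*` is the unique positive real attaining the
value `∑ i, clip (g* * Θ i - 1/2)`. -/
theorem clip_sum_unique (d : ℕ) (Θ : Fin d → ℝ) (gstar : ℝ) (hg : 0 < gstar)
    (hi : ∃ i, 1/2 < gstar * Θ i ∧ gstar * Θ i < 3/2) :
    ∀ g : ℝ, 0 < g →
      (∑ i, clip (g * Θ i - 1/2)) = (∑ i, clip (gstar * Θ i - 1/2)) → g = gstar := by
  obtain ⟨i, hlow, hhigh⟩ := hi
  exact fun g hg_pos ↦ clip_sum_unique_general (c := fun _ ↦ 1/2) (fun _ _ ↦ by norm_num)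
    hg_pos.le hg.le ⟨i, Finset.mem_univ i, by linarith, by linarith⟩
end

section
/- Let t and κ be real numbers with t ≥ 1 and κ ≥ 3, and set N = t·κ² and d = t·κ. Then 2^{N(N−1)/2} ≥ 2^{t²κ⁴/4} · ( κ · 2^{d(d−1)/2} + (κ(κ−1)/2) · 2^{d²} ). -/
/-!
Write `N = κ d`. The coefficients of the coarse space sum to `κ + κ(κ-1)/2 ≤ (1 + κ)²`, no power of
two in it exceeds `2 ^ d²`, and `1 + κ ≤ 2 ^ κ`, so it is at most `2 ^ (2κ + d²)`. It remains to
compare exponents: the slack `N(N-1)/2 - N²/4 = N²/4 - N/2` absorbs `2κ + d²` once `3 ≤ κ ≤ d`.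
-/

/-- The edge search space `S_graph = 2 ^ (n(n-1)/2)` of a graph on `n` nodes, one bit per pair of
nodes; `n` is real so that cluster sizes need not be integers. -/
noncomputable def edgeSearchSpace (n : ℝ) : ℝ :=
  2 ^ (n * (n - 1) / 2)

/-- The coarse-grained search space `S_node + S_link` for `κ` clusters of size `d`: the edges inside
one cluster at a time, then the `d ^ 2` possible edges between one pair of clusters at a time. -/
noncomputable def coarseSearchSpace (κ d : ℝ) : ℝ :=
  κ * edgeSearchSpace d + κ * (κ - 1) / 2 * 2 ^ (d ^ 2)

theorem one_add_le_two_rpow {x : ℝ} (hx : 1 ≤ x) : 1 + x ≤ (2 : ℝ) ^ x := by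
  have bernoulli := one_add_mul_self_le_rpow_one_add (s := 1) (by norm_num) hx
  rwa [mul_one, one_add_one_eq_two] at bernoulli

theorem edgeSearchSpace_le_two_rpow_sq {d : ℝ} (hd : 0 ≤ d) :
    edgeSearchSpace d ≤ 2 ^ (d ^ 2) :=
  Real.rpow_le_rpow_of_exponent_le one_le_two (by nlinarith)

theorem coarseSearchSpace_le_two_rpow {κ d : ℝ} (hκ : 1 ≤ κ) (hd : 0 ≤ d) :
    coarseSearchSpace κ d ≤ 2 ^ (2 * κ + d ^ 2) :=
  calc
    coarseSearchSpace κ d ≤ κ * 2 ^ (d ^ 2) + κ * (κ - 1) / 2 * 2 ^ (d ^ 2) := by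
      unfold coarseSearchSpace
      gcongr
      exact edgeSearchSpace_le_two_rpow_sq hd
    _ = (κ + κ * (κ - 1) / 2) * 2 ^ (d ^ 2) := by ring
    _ ≤ (1 + κ) ^ 2 * 2 ^ (d ^ 2) := by
      gcongr
      nlinarith
    _ ≤ ((2 : ℝ) ^ κ) ^ 2 * 2 ^ (d ^ 2) := by
      gcongr
      exact one_add_le_two_rpow hκ
    _ = 2 ^ (2 * κ + d ^ 2) := by
      rw [Real.rpow_add two_pos, two_mul, Real.rpow_add two_pos, sq ((2 : ℝ) ^ κ)]

theorem sq_div_four_add_le_mul_sub_one_div_two {κ d : ℝ} (hκ : 3 ≤ κ) (hd : κ ≤ d) :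
    (κ * d) ^ 2 / 4 + (2 * κ + d ^ 2) ≤ κ * d * (κ * d - 1) / 2 := by
  have quartic_term : 9 * d ^ 2 ≤ (κ * d) ^ 2 := by
    rw [mul_pow]
    gcongr
    nlinarith
  have cross_term : κ * d ≤ d ^ 2 := by nlinarith
  have linear_term : 3 * κ ≤ d ^ 2 := by nlinarith
  linarith [sq_nonneg d]

theorem two_rpow_sq_div_four_mul_coarseSearchSpace_le {κ d : ℝ} (hκ : 3 ≤ κ) (hd : κ ≤ d) :
    2 ^ ((κ * d) ^ 2 / 4) * coarseSearchSpace κ d ≤ edgeSearchSpace (κ * d) :=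
  calc
    2 ^ ((κ * d) ^ 2 / 4) * coarseSearchSpace κ d
        ≤ 2 ^ ((κ * d) ^ 2 / 4) * 2 ^ (2 * κ + d ^ 2) := by
      gcongr
      exact coarseSearchSpace_le_two_rpow (by linarith) (by linarith)
    _ = 2 ^ ((κ * d) ^ 2 / 4 + (2 * κ + d ^ 2)) := (Real.rpow_add two_pos _ _).symm
    _ ≤ edgeSearchSpace (κ * d) :=
      Real.rpow_le_rpow_of_exponent_le one_le_two
        (sq_div_four_add_le_mul_sub_one_div_two hκ hd)

/-- Headline asymptotic of Theorem 4.1: for `κ ≥ 3`, with `N = t κ²` and `d = t κ`,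
the full search space `2 ^ (N(N-1)/2)` is at least `2 ^ (t²κ⁴/4)` times the
coarse-grained search space `κ · 2 ^ (d(d-1)/2) + (κ(κ-1)/2) · 2 ^ (d²)`. -/
theorem coarse_grained_search_reduction_asymptotic (t κ : ℝ) (ht : 1 ≤ t) (hκ : 3 ≤ κ)
    (N d : ℝ) (hN : N = t * κ ^ 2) (hd : d = t * κ) :
    (2 : ℝ) ^ (N * (N - 1) / 2) ≥
      (2 : ℝ) ^ (t ^ 2 * κ ^ 4 / 4) *
        (κ * (2 : ℝ) ^ (d * (d - 1) / 2) + (κ * (κ - 1) / 2) * (2 : ℝ) ^ (d ^ 2)) := by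
  have hκd : κ ≤ d := hd ▸ le_mul_of_one_le_left (by linarith) ht
  have hN_eq : N = κ * d := by rw [hN, hd]; ring
  have hexp : t ^ 2 * κ ^ 4 / 4 = (κ * d) ^ 2 / 4 := by rw [hd]; ring
  rw [hN_eq, hexp]
  exact two_rpow_sq_div_four_mul_coarseSearchSpace_le hκ hκd
end
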